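/- Let p = 2, let (G,N) be a pair of finite 2-groups, let σ : N* → G be a relative central extension of (G,N), and let M be a G-invariant normal subgroup of N*. Then [𝕌₂(M), G] ≤ 𝕌₂([M,G]) · 𝕌₁([M, _2 G]) · [M, _3 G]. (Lemma 3.6(ii) of the paper.) -/

import Mathlib

/-!
Let `K` be the product of the three subgroups on the right-hand side. Each of them is invariant
under the action of `G`, hence normal in `Nstar`, because conjugation by `n` is the action of
`σ n`. It therefore suffices to see that `G` fixes `m ^ 4` modulo `K` for every `m ∈ M`.

Write `m ^ g = m c` with `c = [m, g] ∈ [M, G]`, and let `d = [c, m] = [c, σ m] ∈ [M, _2 G]`.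
Modulo `K`, the element `d` commutes with `m` and `c`, as `[M, _3 G] ≤ K`; moreover `d ^ 2 = 1` and
`c ^ 4 = 1`. So `⟨m, c⟩` has class at most two modulo `K`, and there
`(m c) ^ 4 = m ^ 4 c ^ 4 d ^ 6 = m ^ 4` (`mul_pow_four_of_class_two`).
-/

/-- The iterated commutator subgroup `[N, _k G]`. -/
def iterCommG {G : Type*} [Group G] (N : Subgroup G) : ℕ → Subgroup G
  | 0 => N
  | k + 1 => ⁅iterCommG N k, (⊤ : Subgroup G)⁆

/-- `𝕌_i(H)`: the subgroup generated by all `p^i`-th powers of elements of `H`. -/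
def pPow {G : Type*} [Group G] (p i : ℕ) (H : Subgroup G) : Subgroup G :=
  Subgroup.closure {x | ∃ h ∈ H, x = h ^ p ^ i}

/-- A relative central extension of the pair `(G, N)`. -/
structure RelCentralExt {M G : Type*} [Group M] [Group G] (σ : M →* G) (N : Subgroup G) where
  /-- the action of `G` on `M`, written `m ↦ m^g` in the paper -/
  act : M → G → M
  act_mul : ∀ m n g, act (m * n) g = act m g * act n g
  act_one : ∀ m, act m 1 = m
  act_act : ∀ m g h, act (act m g) h = act m (g * h)
  range_eq : σ.range = N
  sigma_act : ∀ m g, σ (act m g) = g⁻¹ * σ m * g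
  act_sigma : ∀ m m₁, act m (σ m₁) = m₁⁻¹ * m * m₁
  ker_act : ∀ a ∈ σ.ker, ∀ g : G, act a g = a

namespace RelCentralExt

variable {M G : Type*} [Group M] [Group G] {σ : M →* G} {N : Subgroup G}

/-- The `G`-commutator `[m, g] = m⁻¹ · m^g`. -/
def cmt (E : RelCentralExt σ N) (m : M) (g : G) : M := m⁻¹ * E.act m g

/-- The subgroup `[M', G]` generated by all `G`-commutators `[m, g]`, `m ∈ M'`, `g ∈ G`. -/
def commSub (E : RelCentralExt σ N) (M' : Subgroup M) : Subgroup M :=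
  Subgroup.closure {x | ∃ m ∈ M', ∃ g : G, x = E.cmt m g}

/-- The iterated subgroup `[M', _n G]`. -/
def iterComm (E : RelCentralExt σ N) (M' : Subgroup M) : ℕ → Subgroup M
  | 0 => M'
  | n + 1 => E.commSub (E.iterComm M' n)

end RelCentralExt

/-- The class-two power formula `(m c) ^ 4 = m ^ 4 c ^ 4 [c, m] ^ 6`, in the case where
`[c, m] ^ 2` and `c ^ 4` are trivial. -/
theorem mul_pow_four_of_class_two {Q : Type*} [Group Q] {m c d : Q} (hd : c * m = m * c * d)
    (hdm : Commute d m) (hdc : Commute d c) (hd2 : d ^ 2 = 1) (hc4 : c ^ 4 = 1) :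
    (m * c) ^ 4 = m ^ 4 := by
  have h2 : (m * c) ^ 2 = m ^ 2 * c ^ 2 * d := by
    calc (m * c) ^ 2 = m * (c * m) * c := by simp only [pow_two, mul_assoc]
      _ = m * m * c * (d * c) := by rw [hd]; simp only [mul_assoc]
      _ = m ^ 2 * c ^ 2 * d := by rw [hdc.eq]; simp only [pow_two, mul_assoc]
  have hcm : Commute (c ^ 2) m := by
    change c ^ 2 * m = m * c ^ 2
    calc c ^ 2 * m = c * (c * m) := by simp only [pow_two, mul_assoc]
      _ = (c * m) * (c * d) := by
        conv_lhs => rw [hd]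
        simp only [mul_assoc]
      _ = m * c * (d * c) * d := by rw [hd]; simp only [mul_assoc]
      _ = m * c ^ 2 * d ^ 2 := by rw [hdc.eq]; simp only [pow_two, mul_assoc]
      _ = m * c ^ 2 := by rw [hd2, mul_one]
  have hdmc : Commute (m ^ 2 * c ^ 2) d :=
    ((hdm.pow_right 2).mul_right (hdc.pow_right 2)).symm
  calc (m * c) ^ 4 = ((m * c) ^ 2) ^ 2 := by rw [← pow_mul]
    _ = (m ^ 2) ^ 2 * (c ^ 2) ^ 2 := by
      rw [h2, hdmc.mul_pow, hd2, mul_one, ((hcm.pow_right 2).symm).mul_pow]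
    _ = m ^ 4 := by rw [← pow_mul, ← pow_mul, hc4, mul_one]

namespace RelCentralExt

variable {M G : Type*} [Group M] [Group G] {σ : M →* G} {N : Subgroup G}

/-- The action of a fixed `g : G` as an endomorphism of `M`. -/
def actHom (E : RelCentralExt σ N) (g : G) : M →* M :=
  MonoidHom.mk' (fun m => E.act m g) (fun m n => E.act_mul m n g)

theorem actHom_apply (E : RelCentralExt σ N) (g : G) (m : M) : E.actHom g m = E.act m g := rfl

theorem act_inv (E : RelCentralExt σ N) (m : M) (g : G) : E.act m⁻¹ g = (E.act m g)⁻¹ :=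
  map_inv (E.actHom g) m

theorem act_pow (E : RelCentralExt σ N) (m : M) (k : ℕ) (g : G) :
    E.act (m ^ k) g = E.act m g ^ k :=
  map_pow (E.actHom g) m k

/-- `H` is `G`-invariant. -/
def Inv (E : RelCentralExt σ N) (H : Subgroup M) : Prop := ∀ m ∈ H, ∀ g : G, E.act m g ∈ H

/-- Conjugation by `n` is the action of `σ n`, so invariant subgroups are normal. -/
theorem Inv.normal {E : RelCentralExt σ N} {H : Subgroup M} (h : E.Inv H) : H.Normal := by
  refine ⟨fun x hx n => ?_⟩
  have := h x hx (σ n⁻¹)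
  rwa [E.act_sigma, inv_inv] at this

theorem inv_closure {E : RelCentralExt σ N} {S : Set M} (h : ∀ m ∈ S, ∀ g : G, E.act m g ∈ S) :
    E.Inv (Subgroup.closure S) := by
  intro m hm g
  have : Subgroup.closure S ≤ (Subgroup.closure S).comap (E.actHom g) :=
    (Subgroup.closure_le _).2 fun x hx => Subgroup.subset_closure (h x hx g)
  exact this hm

theorem Inv.pPow {E : RelCentralExt σ N} {H : Subgroup M} (h : E.Inv H) (p i : ℕ) :
    E.Inv (pPow p i H) := by
  refine inv_closure ?_
  rintro _ ⟨x, hx, rfl⟩ g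
  exact ⟨E.act x g, h x hx g, E.act_pow _ _ _⟩

/-- Invariance of `[H, G]` follows from `[m, g]^k = [m^k, k⁻¹gk]`, where `m^k` is the action. -/
theorem Inv.commSub {E : RelCentralExt σ N} {H : Subgroup M} (h : E.Inv H) :
    E.Inv (E.commSub H) := by
  refine inv_closure ?_
  rintro _ ⟨x, hx, g, rfl⟩ k
  refine ⟨E.act x k, h x hx k, k⁻¹ * g * k, ?_⟩
  simp only [cmt, E.act_mul, E.act_inv, E.act_act]
  group

theorem cmt_mem_commSub (E : RelCentralExt σ N) {H : Subgroup M} {m : M} (hm : m ∈ H) (g : G) :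
    E.cmt m g ∈ E.commSub H :=
  Subgroup.subset_closure ⟨m, hm, g, rfl⟩

/-- Modulo a normal subgroup containing `[H, G]`, every `x ∈ H` is central. -/
theorem commute_mk (E : RelCentralExt σ N) {H K : Subgroup M} [K.Normal] (hK : E.commSub H ≤ K)
    {x : M} (hx : x ∈ H) (y : M) : Commute (x : M ⧸ K) (y : M ⧸ K) := by
  have h := hK (E.cmt_mem_commSub hx (σ y))
  rw [cmt, E.act_sigma] at h
  change ((x * y : M) : M ⧸ K) = ((y * x : M) : M ⧸ K)
  rw [eq_comm, QuotientGroup.eq]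
  convert h using 1
  group

/-- The key case of a generator of `𝕌₂(M)`. -/
theorem cmt_pow_four_mem (E : RelCentralExt σ N) {H K : Subgroup M} [K.Normal]
    (h1 : pPow 2 2 (E.commSub H) ≤ K) (h2 : pPow 2 1 (E.iterComm H 2) ≤ K)
    (h3 : E.iterComm H 3 ≤ K) {m : M} (hm : m ∈ H) (g : G) : E.cmt (m ^ 4) g ∈ K := by
  have hc : E.cmt m g ∈ E.commSub H := E.cmt_mem_commSub hm g
  have hd : E.cmt (E.cmt m g) (σ m) ∈ E.iterComm H 2 := E.cmt_mem_commSub hc (σ m)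
  have hmc : E.act m g = m * E.cmt m g := by simp [cmt]
  have hcm : E.cmt m g * m = m * E.cmt m g * E.cmt (E.cmt m g) (σ m) := by
    rw [cmt, cmt, E.act_sigma]
    group
  have hc4 : E.cmt m g ^ 4 ∈ K := h1 (Subgroup.subset_closure ⟨_, hc, by norm_num⟩)
  have hd2 : E.cmt (E.cmt m g) (σ m) ^ 2 ∈ K :=
    h2 (Subgroup.subset_closure ⟨_, hd, by norm_num⟩)
  rw [cmt, E.act_pow, hmc, ← QuotientGroup.eq]
  generalize E.cmt (E.cmt m g) (σ m) = d at *
  generalize E.cmt m g = c at *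
  exact (mul_pow_four_of_class_two (Q := M ⧸ K) (m := m) (c := c) (d := d)
    (congrArg (QuotientGroup.mk (s := K)) hcm)
    (E.commute_mk h3 hd m) (E.commute_mk h3 hd c)
    ((QuotientGroup.eq_one_iff _).2 hd2) ((QuotientGroup.eq_one_iff _).2 hc4)).symm

/-- The elements fixed by `G` modulo a normal subgroup `K` form a subgroup, so it is enough to
test generators. -/
theorem commSub_closure_le (E : RelCentralExt σ N) {S : Set M} {K : Subgroup M} [hK : K.Normal]
    (h : ∀ x ∈ S, ∀ g, E.cmt x g ∈ K) : E.commSub (Subgroup.closure S) ≤ K := by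
  refine (Subgroup.closure_le _).2 ?_
  rintro _ ⟨x, hx, g, rfl⟩
  -- `x` lies in the equalizer of the projection and the projection after acting by `g`.
  have hle : Subgroup.closure S ≤
      ((QuotientGroup.mk' K).eqLocus ((QuotientGroup.mk' K).comp (E.actHom g))) :=
    (Subgroup.closure_le _).2 fun y hy => QuotientGroup.eq.2 (h y hy g)
  exact QuotientGroup.eq.1 (hle hx)

end RelCentralExt

open Pointwise

/-- Lemma 3.6(ii): let `(G, N)` be a pair of finite `2`-groups, `σ : N* → G` a relative
central extension of `(G, N)`, and `M` a `G`-invariant normal subgroup of `N*`. Then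
`[𝕌₂(M), G] ⊆ 𝕌₂([M, G]) · 𝕌₁([M, _2 G]) · [M, _3 G]`. -/
theorem stmt_8 {G : Type*} [Group G] [Finite G]
    (hG : IsPGroup 2 G) (N : Subgroup G) (hN : N.Normal)
    {Nstar : Type*} [Group Nstar] (σ : Nstar →* G) (E : RelCentralExt σ N)
    (M : Subgroup Nstar) (hMn : M.Normal)
    (hMinv : ∀ m ∈ M, ∀ g : G, E.act m g ∈ M) :
    (E.commSub (pPow 2 2 M) : Set Nstar) ⊆
      (pPow 2 2 (E.commSub M) : Set Nstar) * (pPow 2 1 (E.iterComm M 2) : Set Nstar) *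
        (E.iterComm M 3 : Set Nstar) := by
  have hI : E.Inv M := hMinv
  have hA := (hI.commSub.pPow 2 2).normal
  have hB := (hI.commSub.commSub.pPow 2 1).normal
  have hC := hI.commSub.commSub.commSub.normal
  change (pPow 2 1 (E.iterComm M 2)).Normal at hB
  change (E.iterComm M 3).Normal at hC
  rw [← Subgroup.mul_normal, ← Subgroup.mul_normal]
  refine E.commSub_closure_le ?_
  rintro _ ⟨m, hm, rfl⟩ g
  exact E.cmt_pow_four_mem (le_sup_left.trans le_sup_left) (le_sup_right.trans le_sup_left)
    le_sup_right hm g
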